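/- Over the rationals, every periodic matrix A ∈ M_n(ℚ) with rank(A) ≥ n/2 is the sum of a torsion matrix and a square-zero matrix. -/

import Mathlib

/-!
A periodic endomorphism over `ℚ` is a direct sum of companion endomorphisms of powers `X ^ a` and of
cyclotomic polynomials. The rank condition says exactly that the `1 × 1` zero blocks can be shared
out among the other blocks so that the block of a cyclotomic polynomial `f` receives at most `deg f`
of them and the block of `X ^ (a + 2)` at most `a`. It remains to treat one block bordered by zeros.

If `T` has finite order and maps a subspace `W` into a complement `U`, then `T` composed with the
projection onto `U` along `W` differs from `T` by a square-zero endomorphism. Start from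
multiplication by the root on `K[X] / (P)`, where `P` divides some `X ^ M - 1`. As long as `f` and
`P` have the same coefficient just below the leading one, `W` can be chosen so that the resulting
endomorphism acts, modulo its kernel, as the companion endomorphism of `f`. For cyclotomic `f` that
coefficient is a negated value of the Möbius function, hence `0` or `±1`, so a suitable `P` exists.

The extremal numbers of zeros, `deg f` and `a`, are beyond this construction: there an explicit
`2 × 2` identity works, which for `X ^ (a + 2)` involves the automorphism of `K[X] / (X ^ (a + 1))`
that negates the root.
-/

open Polynomial

/-- `a` is the sum of an invertible element of finite order and a square-zero element;
`IsOfFinOrder` already forces invertibility. -/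
def IsTorsionAddSqZero {R : Type*} [Ring R] (a : R) : Prop :=
  ∃ t n : R, IsOfFinOrder t ∧ n ^ 2 = 0 ∧ a = t + n

namespace IsTorsionAddSqZero

section Ring

variable {R S : Type*} [Ring R] [Ring S]

lemma of_isOfFinOrder {t : R} (ht : IsOfFinOrder t) : IsTorsionAddSqZero t :=
  ⟨t, 0, ht, zero_pow two_ne_zero, (add_zero t).symm⟩

lemma map {a : R} (ha : IsTorsionAddSqZero a) (φ : R →+* S) : IsTorsionAddSqZero (φ a) := by
  obtain ⟨t, n, ht, hn, rfl⟩ := ha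
  exact ⟨φ t, φ n, φ.toMonoidHom.isOfFinOrder ht, by rw [← map_pow, hn, map_zero], map_add φ t n⟩

lemma pi {ι : Type*} [Finite ι] {R : ι → Type*} [∀ i, Ring (R i)] {a : ∀ i, R i}
    (ha : ∀ i, IsTorsionAddSqZero (a i)) : IsTorsionAddSqZero a := by
  choose t n ht hn hadd using ha
  exact ⟨t, n, IsOfFinOrder.pi ht, funext hn, funext hadd⟩

end Ring

section Module

variable {K V W : Type*} [CommRing K] [AddCommGroup V] [Module K V] [AddCommGroup W] [Module K W]

lemma iff_of_conj {A : Module.End K V} {B : Module.End K W} (e : V ≃ₗ[K] W)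
    (he : ∀ v, e (A v) = B (e v)) : IsTorsionAddSqZero A ↔ IsTorsionAddSqZero B := by
  let φ : Module.End K V ≃+* Module.End K W := LinearEquiv.conjRingEquiv e
  have hB : φ A = B := by
    ext w
    simp [φ, he]
  constructor
  · exact fun hA => hB ▸ hA.map (φ : Module.End K V →+* Module.End K W)
  · intro h
    rw [← φ.symm_apply_apply A, hB]
    exact h.map (φ.symm : Module.End K W →+* Module.End K V)

lemma piMap {ι : Type*} [Finite ι] {V : ι → Type*} [∀ i, AddCommGroup (V i)]
    [∀ i, Module K (V i)] {A : ∀ i, Module.End K (V i)} (hA : ∀ i, IsTorsionAddSqZero (A i)) :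
    IsTorsionAddSqZero (LinearMap.piMap A : Module.End K (∀ i, V i)) :=
  (pi hA).map
    { toFun := fun A => (LinearMap.piMap A : Module.End K (∀ i, V i))
      map_one' := rfl
      map_mul' := fun _ _ => rfl
      map_zero' := rfl
      map_add' := fun _ _ => rfl }

lemma mul_projection {U W : Submodule K V} (h : IsCompl U W) {T : Module.End K V}
    (hT : IsOfFinOrder T) (hTW : ∀ w ∈ W, T w ∈ U) :
    IsTorsionAddSqZero (T * U.projection W h) := by
  set π := U.projection W h
  have hπ : (1 - π) * T * (1 - π) = 0 := by
    ext v
    have hv : v - π v ∈ W := Submodule.sub_projection_mem h v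
    have := U.projection_apply_of_mem_left h (hTW _ hv)
    change T (v - π v) - π (T (v - π v)) = 0
    rw [this, sub_self]
  refine ⟨T, -(T * (1 - π)), hT, ?_, by noncomm_ring⟩
  calc (-(T * (1 - π))) ^ 2 = T * ((1 - π) * T * (1 - π)) := by noncomm_ring
    _ = 0 := by rw [hπ, mul_zero]

lemma prodMap_zero_of_isOfFinOrder {T : Module.End K V} (hT : IsOfFinOrder T) :
    IsTorsionAddSqZero (T.prodMap (0 : Module.End K V)) := by
  let D : Module.End K (V × V) := T.prodMap T
  let x := LinearMap.fst K V V
  let y := LinearMap.snd K V V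
  -- `diag(1, 0) = [[0, -1], [1, 1]] + [[1, 1], [-1, -1]]`, where the first summand has order 6.
  let ω : Module.End K (V × V) := (-y).prod (x + y)
  let n : Module.End K (V × V) := (x + y).prod (-x - y)
  have hω : ω ^ 6 = 1 := by ext <;> simp [ω, x, y, pow_succ]
  have hn : n ^ 2 = 0 := by ext <;> simp [n, x, y, pow_two]
  have hD : IsOfFinOrder D :=
    (LinearMap.prodMapRingHom K V V).toMonoidHom.isOfFinOrder (hT.prod_mk hT)
  have hDω : Commute D ω := by ext <;> simp [D, ω, x, y]
  have hDn : Commute D n := by ext <;> simp [D, n, x, y]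
  refine ⟨D * ω, D * n, hDω.isOfFinOrder_mul hD ?_, ?_, ?_⟩
  · exact isOfFinOrder_iff_pow_eq_one.2 ⟨6, by norm_num, hω⟩
  · rw [hDn.mul_pow, hn, mul_zero]
  · ext <;> simp [D, n, ω, x, y]

end Module

section Involution

variable {K E : Type*} [CommRing K] [CommRing E] [Algebra K E]

lemma mulLeft_prod_involution {σ : E →ₐ[K] E} (hσ : ∀ x, σ (σ x) = x) {h : E} (hh : σ h = -h) :
    IsTorsionAddSqZero
      ((LinearMap.mulLeft K (2 * h)).prod σ.toLinearMap ∘ₗ LinearMap.fst K E E) := by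
  let A : Module.End K (E × E) :=
    (LinearMap.mulLeft K (2 * h)).prod σ.toLinearMap ∘ₗ LinearMap.fst K E E
  let x := LinearMap.fst K E E
  let y := LinearMap.snd K E E
  let μ := LinearMap.mulLeft K h
  let s := σ.toLinearMap
  let ζ : Module.End K E := μ - s + μ * s
  let N : Module.End K (E × E) := (ζ ∘ₗ x - y).prod (x - ζ ∘ₗ y)
  have hN : N ^ 2 = 0 := by
    refine LinearMap.ext fun v => Prod.ext ?_ ?_ <;>
      simp [N, ζ, μ, s, x, y, hσ, hh, pow_two] <;> ring
  have hT : (A - N) ^ 4 = 1 := by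
    have hsq : (A - N) ^ 2 = (s ∘ₗ x + (2 * μ) ∘ₗ y).prod (s ∘ₗ y) := by
      refine LinearMap.ext fun v => Prod.ext ?_ ?_ <;>
        simp [A, N, ζ, μ, s, x, y, hσ, hh, map_ofNat σ, pow_two] <;> ring
    rw [pow_mul (A - N) 2 2, hsq]
    refine LinearMap.ext fun v => Prod.ext ?_ ?_ <;>
      simp [μ, s, x, y, hσ, hh, map_ofNat σ, pow_two]
  have hA : IsOfFinOrder (A - N) := isOfFinOrder_iff_pow_eq_one.2 ⟨4, by norm_num, hT⟩
  exact ⟨A - N, N, hA, hN, (sub_add_cancel A N).symm⟩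

end Involution

end IsTorsionAddSqZero

section CyclicVector

section CommRing

variable {K : Type*} [CommRing K]

/-- The companion endomorphism of `q`, in its coordinate-free form: multiplication by the root on
`K[X] / (q)`. -/
noncomputable def mulRoot (q : K[X]) : Module.End K (AdjoinRoot q) :=
  LinearMap.mulLeft K (AdjoinRoot.root q)

lemma mulRoot_mk (q p : K[X]) : mulRoot q (AdjoinRoot.mk q p) = AdjoinRoot.mk q (X * p) := by
  rw [map_mul, AdjoinRoot.mk_X]
  rfl

lemma aeval_mulRoot_apply (q p : K[X]) (x : AdjoinRoot q) :
    aeval (mulRoot q) p x = AdjoinRoot.mk q p * x := by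
  have : aeval (mulRoot q) p = LinearMap.mulLeft K (AdjoinRoot.mk q p) := by
    rw [← AdjoinRoot.aeval_eq]
    exact aeval_algHom_apply (Algebra.lmul K (AdjoinRoot q)) _ p
  rw [this, LinearMap.mulLeft_apply]

lemma isOfFinOrder_mulRoot {q : K[X]} {M : ℕ} (hM : 1 ≤ M) (hq : q ∣ X ^ M - 1) :
    IsOfFinOrder (mulRoot q) := by
  refine isOfFinOrder_iff_pow_eq_one.2 ⟨M, hM, ?_⟩
  rw [← sub_eq_zero]
  refine LinearMap.ext fun x => ?_
  have := aeval_mulRoot_apply q (X ^ M - 1) x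
  rwa [AdjoinRoot.mk_eq_zero.2 hq, zero_mul, map_sub, map_pow, aeval_X, map_one] at this

variable {V : Type*} [AddCommGroup V] [Module K V]

lemma aeval_mul_apply (A : Module.End K V) (p q : K[X]) (v : V) :
    aeval A (p * q) v = aeval A p (aeval A q v) := by
  rw [map_mul, Module.End.mul_apply]

lemma aeval_X_mul_apply (A : Module.End K V) (p : K[X]) (v : V) :
    aeval A (X * p) v = A (aeval A p v) := by
  rw [aeval_mul_apply, aeval_X]

/-- The vector `v` makes `A`, on the quotient by its kernel (equivalently, on its range), conjugate
to the companion endomorphism of `f`; the last condition makes `f` minimal. -/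
structure IsCyclicModKer (A : Module.End K V) (f : K[X]) (v : V) : Prop where
  apply_aeval_eq_zero : A (aeval A f v) = 0
  exists_apply_eq : ∀ w, ∃ p : K[X], A w = A (aeval A p v)
  natDegree_le : f.natDegree ≤ Module.finrank K (LinearMap.range A)

lemma apply_aeval_eq_zero_of_dvd {A : Module.End K V} {g p : K[X]} {v : V}
    (hg : A (aeval A g v) = 0) (hgp : g ∣ p) : A (aeval A p v) = 0 := by
  obtain ⟨r, rfl⟩ := hgp
  rw [← aeval_X_mul_apply, ← mul_assoc, mul_comm, aeval_mul_apply, aeval_X_mul_apply, hg, map_zero]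

end CommRing

variable {K V : Type*} [Field K] [AddCommGroup V] [Module K V]

lemma finrank_adjoinRoot (q : K[X]) : Module.finrank K (AdjoinRoot q) = q.natDegree :=
  finrank_quotient_span_eq_natDegree

lemma finrank_range_le_natDegree {A : Module.End K V} {g : K[X]} {v : V} (hg0 : g ≠ 0)
    (hg : A (aeval A g v) = 0) (hv : ∀ w, ∃ p : K[X], A w = A (aeval A p v)) :
    Module.finrank K (LinearMap.range A) ≤ g.natDegree := by
  let Φ : degreeLT K g.natDegree →ₗ[K] V :=
    A ∘ₗ LinearMap.applyₗ v ∘ₗ (aeval A).toLinearMap ∘ₗ (degreeLT K g.natDegree).subtype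
  have hΦ : LinearMap.range A ≤ LinearMap.range Φ := by
    rintro _ ⟨w, rfl⟩
    obtain ⟨p, hp⟩ := hv w
    have hmod : p % g ∈ degreeLT K g.natDegree :=
      mem_degreeLT.2 (degree_eq_natDegree hg0 ▸ EuclideanDomain.mod_lt p hg0)
    refine ⟨⟨p % g, hmod⟩, ?_⟩
    have hdiv := apply_aeval_eq_zero_of_dvd hg (dvd_mul_right g (p / g))
    calc A (aeval A (p % g) v) = A (aeval A (p % g + g * (p / g)) v) := by
          rw [map_add, LinearMap.add_apply, map_add, hdiv, add_zero]
      _ = A w := by rw [EuclideanDomain.mod_add_div, hp]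
  have := Module.Finite.equiv (degreeLTEquiv K g.natDegree).symm
  calc Module.finrank K (LinearMap.range A) ≤ Module.finrank K (LinearMap.range Φ) :=
        Submodule.finrank_mono hΦ
    _ ≤ Module.finrank K (degreeLT K g.natDegree) := Φ.finrank_range_le
    _ = g.natDegree := by rw [(degreeLTEquiv K _).finrank_eq, Module.finrank_fin_fun]

namespace IsCyclicModKer

variable {A : Module.End K V} {f : K[X]} {v : V}

lemma apply_aeval_eq_zero_iff (h : IsCyclicModKer A f v) (hf : f ≠ 0) (p : K[X]) :
    A (aeval A p v) = 0 ↔ f ∣ p := by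
  classical
  refine ⟨fun hp => ?_, apply_aeval_eq_zero_of_dvd h.apply_aeval_eq_zero⟩
  have hg0 : EuclideanDomain.gcd f p ≠ 0 := fun h0 => hf (EuclideanDomain.gcd_eq_zero_iff.1 h0).1
  have hg : A (aeval A (EuclideanDomain.gcd f p) v) = 0 := by
    rw [EuclideanDomain.gcd_eq_gcd_ab, map_add, LinearMap.add_apply, map_add,
      apply_aeval_eq_zero_of_dvd h.apply_aeval_eq_zero (dvd_mul_right _ _),
      apply_aeval_eq_zero_of_dvd hp (dvd_mul_right _ _), add_zero]
  have hassoc : Associated (EuclideanDomain.gcd f p) f :=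
    associated_of_dvd_of_natDegree_le (EuclideanDomain.gcd_dvd_left f p) hf
      (h.natDegree_le.trans (finrank_range_le_natDegree hg0 hg h.exists_apply_eq))
  exact hassoc.symm.dvd.trans (EuclideanDomain.gcd_dvd_right f p)

end IsCyclicModKer

lemma exists_equiv_mulRoot_prodMap_zero [FiniteDimensional K V] {A : Module.End K V} {q : K[X]}
    (hq : q.Monic) {w : V} (hw : ∀ p, aeval A p w = 0 ↔ q ∣ p)
    (hgen : ∀ u, ∃ p : K[X], A u = A (aeval A p w)) {z : ℕ}
    (hz : Module.finrank K V = q.natDegree + z) :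
    ∃ e : (AdjoinRoot q × (Fin z → K)) ≃ₗ[K] V,
      ∀ x, e ((mulRoot q).prodMap 0 x) = A (e x) := by
  let φ : AdjoinRoot q →ₗ[K] V :=
    LinearMap.applyₗ w ∘ₗ (aeval A).toLinearMap ∘ₗ AdjoinRoot.modByMonicHom hq
  have hφ : ∀ p, φ (AdjoinRoot.mk q p) = aeval A p w := fun p => by
    have : aeval A (q * (p /ₘ q)) w = 0 := (hw _).2 (dvd_mul_right _ _)
    conv_rhs => rw [← modByMonic_add_div p q, map_add, LinearMap.add_apply, this, add_zero]
    simp [φ, AdjoinRoot.modByMonicHom_mk hq]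
  have hinj : Function.Injective φ := by
    refine (injective_iff_map_eq_zero φ).2 fun x hx => ?_
    obtain ⟨p, rfl⟩ := AdjoinRoot.mk_surjective x
    exact AdjoinRoot.mk_eq_zero.2 ((hw p).1 (hφ p ▸ hx))
  have hφA : ∀ x, φ (mulRoot q x) = A (φ x) := fun x => by
    obtain ⟨p, rfl⟩ := AdjoinRoot.mk_surjective x
    rw [mulRoot_mk, hφ, hφ, aeval_X_mul_apply]
  let W := LinearMap.range φ
  have hsup : Codisjoint W (LinearMap.ker A) := codisjoint_iff_le_sup.2 fun u _ => by
    obtain ⟨p, hp⟩ := hgen u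
    have hker : u - φ (AdjoinRoot.mk q p) ∈ LinearMap.ker A := by
      rw [LinearMap.mem_ker, map_sub, hφ, hp, sub_self]
    exact Submodule.mem_sup.2 ⟨_, LinearMap.mem_range_self φ _, _, hker, add_sub_cancel _ u⟩
  obtain ⟨L, hLker, hcompl⟩ := hsup.symm.exists_isCompl
  have hL : Module.finrank K L = z := by
    have hadd := Submodule.finrank_add_eq_of_isCompl hcompl.symm
    have hW : Module.finrank K W = q.natDegree := by
      rw [LinearMap.finrank_range_of_inj hinj, finrank_adjoinRoot]
    omega
  let eL : (Fin z → K) ≃ₗ[K] L := LinearEquiv.ofFinrankEq _ _ (by rw [hL, Module.finrank_fin_fun])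
  refine ⟨((LinearEquiv.ofInjective φ hinj).prodCongr eL).trans
    (Submodule.prodEquivOfIsCompl W L hcompl.symm), fun x => ?_⟩
  have hAL : A (eL x.2) = 0 := hLker (eL x.2).2
  simp [Submodule.coe_prodEquivOfIsCompl', hφA, hAL]

namespace IsCyclicModKer

variable [FiniteDimensional K V] {A : Module.End K V} {f : K[X]} {v : V}

lemma mulRoot_of_isCoprime (h : IsCyclicModKer A f v) (hA : IsTorsionAddSqZero A) (hf : f.Monic)
    (hX : IsCoprime X f) {z : ℕ} (hz : Module.finrank K V = f.natDegree + z) :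
    IsTorsionAddSqZero ((mulRoot f).prodMap (0 : Module.End K (Fin z → K))) := by
  have hw (p : K[X]) : aeval A p (A v) = A (aeval A p v) := by
    rw [← aeval_X_mul_apply, mul_comm, aeval_mul_apply, aeval_X]
  have hgen (u : V) : ∃ p : K[X], A u = A (aeval A p (A v)) := by
    obtain ⟨p, hp⟩ := h.exists_apply_eq u
    obtain ⟨a, b, hab⟩ := hX
    refine ⟨p * a, ?_⟩
    have hdvd : f ∣ p - X * (p * a) := ⟨p * b, by linear_combination -p * hab⟩
    have := (h.apply_aeval_eq_zero_iff hf.ne_zero _).2 hdvd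
    rwa [map_sub, LinearMap.sub_apply, map_sub, sub_eq_zero, aeval_X_mul_apply, ← hp, ← hw] at this
  obtain ⟨e, he⟩ := exists_equiv_mulRoot_prodMap_zero hf
    (fun p => (hw p).symm ▸ h.apply_aeval_eq_zero_iff hf.ne_zero p) hgen hz
  exact (IsTorsionAddSqZero.iff_of_conj e he).2 hA

lemma mulRoot_of_dvd (h : IsCyclicModKer A f v) (hA : IsTorsionAddSqZero A) (hf : f.Monic)
    (hX : X ∣ f) {z : ℕ} (hz : Module.finrank K V = (X * f).natDegree + z) :
    IsTorsionAddSqZero ((mulRoot (X * f)).prodMap (0 : Module.End K (Fin z → K))) := by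
  have hv (p : K[X]) : aeval A p v = 0 ↔ X * f ∣ p := by
    constructor
    · intro hp
      obtain ⟨g, rfl⟩ := (h.apply_aeval_eq_zero_iff hf.ne_zero p).1 (by rw [hp, map_zero])
      obtain ⟨r, rfl⟩ := hX
      have hr : X * r ∣ r * g := by
        rw [← h.apply_aeval_eq_zero_iff hf.ne_zero, ← aeval_X_mul_apply, ← mul_assoc, hp]
      rw [mul_comm X r, mul_dvd_mul_iff_left (right_ne_zero_of_mul hf.ne_zero)] at hr
      rw [mul_comm]
      exact mul_dvd_mul_left _ hr
    · rintro ⟨g, rfl⟩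
      rw [mul_comm, aeval_mul_apply, aeval_X_mul_apply, h.apply_aeval_eq_zero, map_zero]
  obtain ⟨e, he⟩ := exists_equiv_mulRoot_prodMap_zero (monic_X.mul hf) hv h.exists_apply_eq hz
  exact (IsTorsionAddSqZero.iff_of_conj e he).2 hA

end IsCyclicModKer

end CyclicVector

section Numerators

section Ring

variable {R : Type*} [Ring R]

lemma coeff_iterate_divX (f : R[X]) (n i : ℕ) : (divX^[n] f).coeff i = f.coeff (i + n) := by
  induction n generalizing i with
  | zero => rfl
  | succ n ih => rw [Function.iterate_succ_apply', coeff_divX, ih, add_assoc, add_comm 1 n]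

lemma exists_horner [Nontrivial R] {f : R[X]} (hf : f.Monic) {s n : ℕ} (hs : 1 ≤ s)
    (hn : f.natDegree = s + n) :
    ∃ (G : ℕ → R[X]) (a : ℕ → R), (G 0).Monic ∧ (G 0).natDegree = s ∧
      (G 0).nextCoeff = f.nextCoeff ∧ G n = f ∧ ∀ t < n, G (t + 1) = X * G t + C (a t) := by
  let G (t : ℕ) : R[X] := divX^[n - t] f
  have htop : (G 0).coeff s = 1 := by
    rw [coeff_iterate_divX, tsub_zero, ← hn, hf.coeff_natDegree]
  have hle : (G 0).natDegree ≤ s := natDegree_le_iff_coeff_eq_zero.2 fun i hi => by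
    rw [coeff_iterate_divX, coeff_eq_zero_of_natDegree_lt (by omega)]
  have hdeg : (G 0).natDegree = s := natDegree_eq_of_le_of_coeff_ne_zero hle (by simp [htop])
  refine ⟨G, fun t => (G (t + 1)).coeff 0, monic_of_natDegree_le_of_coeff_eq_one s hle htop, hdeg,
    ?_, by simp [G], fun t ht => ?_⟩
  · rw [nextCoeff_of_natDegree_pos (by omega), nextCoeff_of_natDegree_pos (by omega), hdeg, hn,
      coeff_iterate_divX]
    congr 1
    omega
  · have : G t = divX (G (t + 1)) := by
      simp only [G]
      rw [← Function.iterate_succ_apply' divX]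
      congr 2
      omega
    rw [this, X_mul, divX_mul_X_add]

lemma natDegree_sub_le_of_nextCoeff_eq {p q : R[X]} (hp : p.Monic) (hq : q.Monic) {n : ℕ}
    (hpn : p.natDegree = n + 2) (hqn : q.natDegree = n + 2) (h : p.nextCoeff = q.nextCoeff) :
    (p - q).natDegree ≤ n := by
  refine natDegree_le_iff_coeff_eq_zero.2 fun i hi => ?_
  rw [coeff_sub, sub_eq_zero]
  rw [nextCoeff_of_natDegree_pos (by omega), nextCoeff_of_natDegree_pos (by omega), hpn, hqn] at h
  obtain rfl | rfl | hi : i = n + 1 ∨ i = n + 2 ∨ n + 2 < i := by omega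
  · exact h
  · rw [← hpn, hp.coeff_natDegree, hpn, ← hqn, hq.coeff_natDegree]
  · rw [coeff_eq_zero_of_natDegree_lt (by omega), coeff_eq_zero_of_natDegree_lt (by omega)]

end Ring

variable {K : Type*} [Field K]

lemma exists_X_sq_dvd_add {c : K} (hc : c ≠ 0) (P : K[X]) (t : ℕ) :
    ∃ b : K[X], b.natDegree ≤ 1 ∧ X ^ 2 ∣ P + (X - C c) ^ t * b := by
  have hcop : IsCoprime (X ^ 2 : K[X]) ((X - C c) ^ t) := by
    simpa using (isCoprime_X_sub_C_of_isUnit_sub (a := 0) (b := c) (by simpa using hc)).pow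
  obtain ⟨u, w, huw⟩ := hcop
  refine ⟨(-(P * w)) %ₘ X ^ 2, ?_, ?_⟩
  · have := natDegree_modByMonic_lt (-(P * w)) (monic_X_pow 2) fun h => by
      simpa using congrArg natDegree h
    rw [natDegree_X_pow] at this
    omega
  · refine ⟨P * u - (X - C c) ^ t * (-(P * w) /ₘ X ^ 2), ?_⟩
    linear_combination -P * huw + (X - C c) ^ t * modByMonic_add_div (-(P * w)) (X ^ 2 : K[X])

/-- These are the numerators of the vectors `Y t / (X - c) ^ t` modulo `P`, for which the recursion
reads `X * (X * y t - y (t + 1)) = b t - c * y (t + 1)`; the multiple of `y (t + 1)` is what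
leaves enough freedom to prescribe both `Y 0` and `Y (z + 1)`. -/
lemma exists_numerators {c : K} (hc : c ≠ 0) {s : ℕ} (hs : 1 ≤ s) (h : K[X]) (z : ℕ) (P : K[X])
    (hP : (X ^ (2 * (z + 1)) * h - P).natDegree ≤ 2 * z + s) :
    ∃ Y b : ℕ → K[X], Y 0 = h ∧ Y (z + 1) = P ∧
      ∀ t ≤ z, (b t).natDegree ≤ s ∧ X ^ 2 * Y t = Y (t + 1) + (X - C c) ^ t * b t := by
  induction z generalizing P with
  | zero =>
    refine ⟨Function.update (fun _ => h) 1 P, fun _ => X ^ 2 * h - P, by simp, by simp, ?_⟩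
    rintro t ht
    obtain rfl : t = 0 := by omega
    simpa using hP
  | succ z ih =>
    obtain ⟨b₁, hb₁, Q, hQ⟩ := exists_X_sq_dvd_add hc P (z + 1)
    have hdeg : (X ^ (2 * (z + 1)) * h - Q).natDegree ≤ 2 * z + s := by
      have hb : ((X - C c) ^ (z + 1) * b₁).natDegree ≤ 2 * (z + 1) + s := by
        have := natDegree_mul_le (p := (X - C c) ^ (z + 1)) (q := b₁)
        rw [natDegree_pow, natDegree_X_sub_C] at this
        omega
      have heq : X ^ 2 * (X ^ (2 * (z + 1)) * h - Q) =
          X ^ (2 * (z + 1 + 1)) * h - P - (X - C c) ^ (z + 1) * b₁ := by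
        linear_combination hQ
      have hle := natDegree_sub_le_of_le hP hb
      rw [max_self, ← heq] at hle
      by_cases h0 : X ^ (2 * (z + 1)) * h - Q = 0
      · simp [h0]
      · rw [(monic_X_pow 2).natDegree_mul' h0, natDegree_X_pow] at hle
        omega
    obtain ⟨Y, b, hY0, hYz, hY⟩ := ih Q hdeg
    refine ⟨Function.update Y (z + 2) P, Function.update b (z + 1) b₁, by simpa, by simp,
      fun t ht => ?_⟩
    obtain ht | rfl := ht.lt_or_eq
    · have := hY t (by omega)
      simpa [Function.update_of_ne, ht.ne, show t ≠ z + 2 by omega, show t + 1 ≠ z + 2 by omega]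
    · simpa [hYz, hb₁.trans hs] using hQ.symm

end Numerators

section Ladder

variable {K V : Type*} [CommRing K] [AddCommGroup V] [Module K V]

/-- The Krylov subspace of the vectors `p(T) v` with `deg p < n`. -/
noncomputable def krylov (T : Module.End K V) (v : V) (n : ℕ) : Submodule K V :=
  (degreeLT K n).map (LinearMap.applyₗ v ∘ₗ (aeval T).toLinearMap)

lemma aeval_apply_mem_krylov {T : Module.End K V} {v : V} {n : ℕ} {p : K[X]}
    (hp : p.natDegree < n) : aeval T p v ∈ krylov T v n :=
  ⟨p, mem_degreeLT.2 (degree_le_natDegree.trans_lt (by exact_mod_cast hp)), rfl⟩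

lemma exists_of_mem_krylov {T : Module.End K V} {v w : V} {n : ℕ} (hw : w ∈ krylov T v (n + 1)) :
    ∃ p : K[X], p.natDegree ≤ n ∧ aeval T p v = w := by
  obtain ⟨p, hp, rfl⟩ := hw
  rw [SetLike.mem_coe, degreeLT_succ_eq_degreeLE, mem_degreeLE] at hp
  exact ⟨p, natDegree_le_of_degree_le hp, rfl⟩

/-- Data for changing the companion polynomial of `T` by a square-zero summand. The Horner
partial sums `G t` run from a polynomial of degree `s` up to the new companion polynomial
`G (z + 1)`, while `y t` is a vector that is going to be congruent to `G t (A) v` modulo the kernel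
of the perturbed endomorphism `A`. -/
structure Ladder (T : Module.End K V) (v : V) (s z : ℕ) where
  G : ℕ → K[X]
  a : ℕ → K
  y : ℕ → V
  one_le : 1 ≤ s
  monic : (G 0).Monic
  natDegree : (G 0).natDegree = s
  G_succ : ∀ t ≤ z, G (t + 1) = X * G t + C (a t)
  y_zero : y 0 = aeval T (G 0) v
  y_last : y (z + 1) = 0
  apply_sub_mem : ∀ t ≤ z, T (T (y t) - y (t + 1)) ∈ krylov T v (s + 1) ⊔ K ∙ y (t + 1)

namespace Ladder

variable {T : Module.End K V} {v : V} {s z : ℕ} (D : Ladder T v s z)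

/-- The complement of `Ladder.lower` on which the perturbed endomorphism agrees with `T`. -/
noncomputable def upper : Submodule K V :=
  krylov T v (s + 1) ⊔ Submodule.span K (Set.range fun t : Fin z => D.y (t + 1))

/-- The kernel of the perturbed endomorphism. Killing these vectors turns the Horner recursion
for `G` into one for `y`. -/
noncomputable def lower : Submodule K V :=
  Submodule.span K (Set.range fun t : Fin (z + 1) => T (D.y t) - D.y (t + 1) + D.a t • v)

lemma mem_upper : v ∈ D.upper :=
  Submodule.mem_sup_left (by
    simpa using aeval_apply_mem_krylov (T := T) (v := v) (p := 1) (n := s + 1) (by simp))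

lemma y_mem_upper {t : ℕ} (ht : t ≤ z + 1) : D.y t ∈ D.upper := by
  obtain _ | t := t
  · exact D.y_zero ▸ Submodule.mem_sup_left (aeval_apply_mem_krylov (by simp [D.natDegree]))
  obtain rfl | ht : t = z ∨ t < z := by omega
  · exact D.y_last ▸ zero_mem _
  · exact Submodule.mem_sup_right (Submodule.subset_span ⟨⟨t, ht⟩, rfl⟩)

lemma step_mem_lower {t : ℕ} (ht : t ≤ z) : T (D.y t) - D.y (t + 1) + D.a t • v ∈ D.lower :=
  Submodule.subset_span ⟨⟨t, by omega⟩, rfl⟩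

lemma apply_mem_upper : ∀ w ∈ D.lower, T w ∈ D.upper := by
  change D.lower ≤ D.upper.comap T
  refine Submodule.span_le.2 ?_
  rintro _ ⟨⟨t, ht⟩, rfl⟩
  have hTv : T v ∈ krylov T v (s + 1) := by
    have := D.one_le
    simpa using aeval_apply_mem_krylov (T := T) (v := v) (p := X) (n := s + 1)
      (natDegree_X_le.trans_lt (by omega))
  have hle : krylov T v (s + 1) ⊔ K ∙ D.y (t + 1) ≤ D.upper :=
    sup_le le_sup_left ((Submodule.span_singleton_le_iff_mem _ _).2 (D.y_mem_upper (by omega)))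
  change T (T (D.y t) - D.y (t + 1) + D.a t • v) ∈ D.upper
  rw [map_add, map_smul]
  exact add_mem (hle (D.apply_sub_mem t (by omega)))
    (Submodule.smul_mem _ _ (Submodule.mem_sup_left hTv))

lemma apply_y_mem_sup {t : ℕ} (ht : t ≤ z) : T (D.y t) ∈ D.upper ⊔ D.lower := by
  have := Submodule.add_mem_sup
    (sub_mem (D.y_mem_upper (t := t + 1) (by omega)) (D.upper.smul_mem (D.a t) D.mem_upper))
    (D.step_mem_lower ht)
  convert this using 1
  abel

lemma apply_mem_sup_of_mem_krylov {w : V} (hw : w ∈ krylov T v (s + 1)) :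
    T w ∈ D.upper ⊔ D.lower := by
  obtain ⟨p, hp, rfl⟩ := exists_of_mem_krylov hw
  let r := p - C (p.coeff s) * D.G 0
  have hr : (X * r).natDegree < s + 1 := by
    have hG : (D.G 0).coeff s = 1 := by
      simpa only [D.natDegree] using D.monic.coeff_natDegree
    refine Nat.lt_succ_of_le (natDegree_le_iff_coeff_eq_zero.2 fun i hi => ?_)
    obtain _ | i := i
    · exact coeff_X_mul_zero r
    obtain rfl | hi : i = s ∨ s < i := by omega
    · simp [r, hG]
    · have hGi : (D.G 0).coeff i = 0 := coeff_eq_zero_of_natDegree_lt (by rwa [D.natDegree])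
      simp [r, hGi, coeff_eq_zero_of_natDegree_lt (hp.trans_lt hi)]
  have hpr : X * p = X * r + p.coeff s • (X * D.G 0) := by
    simp only [r, smul_eq_C_mul]
    ring
  rw [← aeval_X_mul_apply, hpr, map_add, map_smul, LinearMap.add_apply, LinearMap.smul_apply,
    aeval_X_mul_apply T (D.G 0), ← D.y_zero]
  exact add_mem (Submodule.mem_sup_left (Submodule.mem_sup_left (aeval_apply_mem_krylov hr)))
    (Submodule.smul_mem _ _ (D.apply_y_mem_sup (Nat.zero_le z)))

lemma sup_eq_top (hv : ∀ w, ∃ p : K[X], aeval T p v = w) : D.upper ⊔ D.lower = ⊤ := by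
  have hinv : D.upper ⊔ D.lower ≤ (D.upper ⊔ D.lower).comap T := by
    refine sup_le (sup_le (fun w hw => D.apply_mem_sup_of_mem_krylov hw) ?_) ?_
    · refine Submodule.span_le.2 ?_
      rintro _ ⟨⟨t, ht⟩, rfl⟩
      exact D.apply_y_mem_sup (by omega)
    · exact fun w hw => Submodule.mem_sup_left (D.apply_mem_upper w hw)
  refine eq_top_iff.2 fun w _ => ?_
  obtain ⟨p, rfl⟩ := hv w
  exact aeval_apply_smul_mem_of_le_comap (Submodule.mem_sup_left D.mem_upper) p T hinv

variable (h : IsCompl D.upper D.lower)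

/-- The perturbed endomorphism: `T` after the projection to `upper` along `lower`. -/
noncomputable def endo : Module.End K V :=
  T * D.upper.projection D.lower h

lemma isTorsionAddSqZero_endo (hT : IsOfFinOrder T) : IsTorsionAddSqZero (D.endo h) :=
  IsTorsionAddSqZero.mul_projection h hT D.apply_mem_upper

lemma endo_apply_of_mem_upper {w : V} (hw : w ∈ D.upper) : D.endo h w = T w := by
  rw [endo, Module.End.mul_apply, Submodule.projection_apply_of_mem_left h hw]

lemma endo_apply_of_mem_lower {w : V} (hw : w ∈ D.lower) : D.endo h w = 0 := by
  rw [endo, Module.End.mul_apply, Submodule.projection_apply_of_mem_right h hw, map_zero]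

lemma aeval_endo_apply {p : K[X]} (hp : p.natDegree ≤ s) :
    aeval (D.endo h) p v = aeval T p v := by
  have hpow : ∀ i ≤ s, (D.endo h ^ i) v = (T ^ i) v := by
    intro i hi
    induction i with
    | zero => rfl
    | succ i ih =>
      have hmem : (T ^ i) v ∈ D.upper := Submodule.mem_sup_left (by
        simpa using aeval_apply_mem_krylov (T := T) (v := v) (p := X ^ i) (n := s + 1)
          ((natDegree_X_pow_le i).trans_lt (by omega)))
      rw [pow_succ', pow_succ', Module.End.mul_apply, Module.End.mul_apply, ih (by omega),
        D.endo_apply_of_mem_upper h hmem]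
  rw [aeval_eq_sum_range' (Nat.lt_succ_of_le hp), aeval_eq_sum_range' (Nat.lt_succ_of_le hp),
    LinearMap.sum_apply, LinearMap.sum_apply]
  refine Finset.sum_congr rfl fun i hi => ?_
  rw [LinearMap.smul_apply, LinearMap.smul_apply, hpow i (Finset.mem_range_succ_iff.1 hi)]

lemma endo_y {t : ℕ} (ht : t ≤ z + 1) :
    D.endo h (D.y t) = D.endo h (aeval (D.endo h) (D.G t) v) := by
  induction t with
  | zero => rw [D.y_zero, D.aeval_endo_apply h D.natDegree.le]
  | succ t ih =>
    have hstep := D.endo_apply_of_mem_lower h (D.step_mem_lower (t := t) (by omega))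
    rw [← D.endo_apply_of_mem_upper h (D.y_mem_upper (t := t) (by omega)), ih (by omega), map_add,
      map_sub, sub_add_eq_add_sub, sub_eq_zero] at hstep
    rw [← hstep, ← map_add, D.G_succ t (by omega), map_add (aeval _), LinearMap.add_apply,
      aeval_X_mul_apply, aeval_C, Module.algebraMap_end_apply]

lemma exists_endo_apply_eq (w : V) :
    ∃ p : K[X], D.endo h w = D.endo h (aeval (D.endo h) p v) := by
  let Φ := D.endo h ∘ₗ LinearMap.applyₗ v ∘ₗ (aeval (D.endo h)).toLinearMap
  let S := (LinearMap.range Φ).comap (D.endo h)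
  suffices hS : D.upper ⊔ D.lower ≤ S by
    obtain ⟨p, hp⟩ := hS (h.sup_eq_top ▸ Submodule.mem_top : w ∈ D.upper ⊔ D.lower)
    exact ⟨p, hp.symm⟩
  refine sup_le (sup_le (fun u hu => ?_) (Submodule.span_le.2 ?_)) fun u hu => ?_
  · obtain ⟨p, hp, rfl⟩ := exists_of_mem_krylov hu
    exact ⟨p, congrArg (D.endo h) (D.aeval_endo_apply h hp)⟩
  · rintro _ ⟨⟨t, ht⟩, rfl⟩
    exact ⟨D.G (t + 1), (D.endo_y h (by omega)).symm⟩
  · exact ⟨0, by simp [D.endo_apply_of_mem_lower h hu]⟩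

section Field

variable {K V : Type*} [Field K] [AddCommGroup V] [Module K V] {T : Module.End K V} {v : V}
  {s z : ℕ} (D : Ladder T v s z)

lemma finrank_lower_le : Module.finrank K D.lower ≤ z + 1 :=
  (finrank_range_le_card _).trans_eq (Fintype.card_fin _)

lemma finrank_upper_le [FiniteDimensional K V] : Module.finrank K D.upper ≤ s + 1 + z := by
  have := Module.Finite.equiv (degreeLTEquiv K (s + 1)).symm
  have hk : Module.finrank K (krylov T v (s + 1)) ≤ s + 1 := by
    refine (Submodule.finrank_map_le _ _).trans_eq ?_
    rw [(degreeLTEquiv K _).finrank_eq, Module.finrank_fin_fun]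
  have hspan := finrank_range_le_card (R := K) fun t : Fin z => D.y (t + 1)
  rw [Fintype.card_fin] at hspan
  exact (Submodule.finrank_add_le_finrank_add_finrank _ _).trans (add_le_add hk hspan)

lemma isCompl [FiniteDimensional K V] (hv : ∀ w, ∃ p : K[X], aeval T p v = w)
    (hdim : Module.finrank K V = s + 2 * (z + 1)) : IsCompl D.upper D.lower := by
  have htop := D.sup_eq_top hv
  have hsum := Submodule.finrank_sup_add_finrank_inf_eq D.upper D.lower
  rw [htop, finrank_top, hdim] at hsum
  have hinf : Module.finrank K ↥(D.upper ⊓ D.lower) = 0 := by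
    have := D.finrank_upper_le
    have := D.finrank_lower_le
    omega
  exact ⟨disjoint_iff.2 (Submodule.finrank_eq_zero.1 hinf), codisjoint_iff.2 htop⟩

lemma finrank_range_endo (h : IsCompl D.upper D.lower) (hT : Function.Injective T) :
    Module.finrank K (LinearMap.range (D.endo h)) = Module.finrank K D.upper := by
  have : LinearMap.range (D.endo h) = D.upper.map T := by
    rw [endo, Module.End.mul_eq_comp, LinearMap.range_comp, Submodule.range_projection]
  rw [this, (D.upper.equivMapOfInjective T hT).finrank_eq]

lemma isCyclicModKer [FiniteDimensional K V] (h : IsCompl D.upper D.lower)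
    (hT : Function.Injective T) (hdim : Module.finrank K V = s + 2 * (z + 1))
    (hG : (D.G (z + 1)).natDegree = s + (z + 1)) : IsCyclicModKer (D.endo h) (D.G (z + 1)) v where
  apply_aeval_eq_zero := by rw [← D.endo_y h le_rfl, D.y_last, map_zero]
  exists_apply_eq := D.exists_endo_apply_eq h
  natDegree_le := by
    have := Submodule.finrank_add_eq_of_isCompl h
    have := D.finrank_lower_le
    rw [D.finrank_range_endo h hT]
    omega

end Field

end Ladder

end Ladder

section CompanionPolynomials

variable {R : Type*} [CommRing R]

lemma isCoprime_X_of_dvd_X_pow_sub_one {f : R[X]} {M : ℕ} (hM : 1 ≤ M) (hf : f ∣ X ^ M - 1) :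
    IsCoprime X f :=
  .of_isCoprime_of_dvd_right
    ⟨X ^ (M - 1), -1, by rw [← pow_succ, Nat.sub_add_cancel hM]; ring⟩ hf

variable [Nontrivial R]

lemma nextCoeff_X_pow_add_C {n : ℕ} (hn : 2 ≤ n) (c : R) : (X ^ n + C c).nextCoeff = 0 := by
  rw [nextCoeff_of_natDegree_pos (by rw [natDegree_X_pow_add_C]; omega), natDegree_X_pow_add_C,
    coeff_add, coeff_X_pow, coeff_C, if_neg (by omega), if_neg (by omega), add_zero]

lemma exists_monic_nextCoeff_eq_dvd_X_pow_sub_one {δ : R} (hδ : δ = 0 ∨ δ ^ 2 = 1) {n : ℕ}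
    (hn : 3 ≤ n) : ∃ P : R[X], P.Monic ∧ P.natDegree = n ∧ P.nextCoeff = δ ∧
      ∃ M, 1 ≤ M ∧ P ∣ X ^ M - 1 := by
  obtain rfl | hδ := hδ
  · refine ⟨X ^ n + C (-1), monic_X_pow_add_C _ (by omega), natDegree_X_pow_add_C,
      nextCoeff_X_pow_add_C (by omega) _, n, by omega, ?_⟩
    rw [C_neg, C_1, ← sub_eq_add_neg]
  obtain ⟨n, rfl⟩ := Nat.exists_eq_add_of_le' (by omega : 1 ≤ n)
  have hL : (X - C (-δ)).Monic := monic_X_sub_C _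
  have hQ : (X ^ n + C ((-δ) ^ n)).Monic := monic_X_pow_add_C _ (by omega)
  refine ⟨(X - C (-δ)) * (X ^ n + C ((-δ) ^ n)), hL.mul hQ, ?_, ?_, 2 * n, by omega, ?_⟩
  · rw [hL.natDegree_mul hQ, natDegree_X_sub_C, natDegree_X_pow_add_C, add_comm]
  · rw [hL.nextCoeff_mul hQ, nextCoeff_X_sub_C, nextCoeff_X_pow_add_C (by omega), neg_neg, add_zero]
  · have hδn : (C ((-δ) ^ n) : R[X]) ^ 2 = 1 := by
      rw [← C_pow, ← pow_mul, mul_comm, pow_mul, neg_sq, hδ, one_pow, C_1]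
    have hsplit : (X ^ (2 * n) - 1 : R[X]) = (X ^ n - C (-δ) ^ n) * (X ^ n + C ((-δ) ^ n)) := by
      rw [C_pow] at hδn ⊢
      linear_combination hδn
    rw [hsplit]
    exact mul_dvd_mul_right (sub_dvd_pow_sub_pow _ _ n) _

lemma nextCoeff_X_pow_sub_one {n : ℕ} (hn : 0 < n) :
    (X ^ n - 1 : R[X]).nextCoeff = if n = 1 then -1 else 0 := by
  have hC : (X ^ n - 1 : R[X]) = X ^ n + C (-1) := by rw [C_neg, C_1, sub_eq_add_neg]
  split_ifs with h
  · rw [h, pow_one, ← C_1, nextCoeff_X_sub_C]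
  · rw [hC, nextCoeff_X_pow_add_C (by omega)]

lemma nextCoeff_cyclotomic {m : ℕ} (hm : 0 < m) :
    (cyclotomic m R).nextCoeff = -(ArithmeticFunction.moebius m : R) := by
  have hsum : ∀ n > 0, ∑ i ∈ n.divisors, (cyclotomic i R).nextCoeff = if n = 1 then -1 else 0 := by
    intro n hn
    rw [← Monic.nextCoeff_prod _ _ fun i _ => cyclotomic.monic i R,
      prod_cyclotomic_eq_X_pow_sub_one hn, nextCoeff_X_pow_sub_one hn]
  rw [← ArithmeticFunction.sum_eq_iff_sum_mul_moebius_eq.1 hsum m hm,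
    Finset.sum_eq_single_of_mem (m, 1) (by simp [hm.ne'])]
  · simp
  · rintro ⟨a, b⟩ hab hne
    rw [Nat.mem_divisorsAntidiagonal] at hab
    have hb : b ≠ 1 := by
      rintro rfl
      exact hne (by simp [← hab.1])
    rw [if_neg hb, mul_zero]

lemma nextCoeff_cyclotomic_eq_zero_or_sq_eq_one {m : ℕ} (hm : 0 < m) :
    (cyclotomic m R).nextCoeff = 0 ∨ (cyclotomic m R).nextCoeff ^ 2 = 1 := by
  rw [nextCoeff_cyclotomic hm]
  obtain h | h | h := ArithmeticFunction.moebius_eq_or m <;> simp [h]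

end CompanionPolynomials

section Perturbation

variable {K : Type*} [Field K]

lemma exists_ladder {f P : K[X]} (hf : f.Monic) (hP : P.Monic) {s z : ℕ} (hs : 1 ≤ s)
    (hfd : f.natDegree = s + (z + 1)) (hPd : P.natDegree = s + 2 * (z + 1))
    (hcoeff : f.nextCoeff = P.nextCoeff) {c : K} (hc : c ≠ 0) (hPc : P.eval c ≠ 0) :
    ∃ D : Ladder (mulRoot P) 1 s z, D.G (z + 1) = f := by
  obtain ⟨G, a, hG, hGd, hGcoeff, rfl, hGsucc⟩ := exists_horner hf hs hfd
  have hdeg : (X ^ (2 * (z + 1)) * G 0 - P).natDegree ≤ 2 * z + s := by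
    refine natDegree_sub_le_of_nextCoeff_eq ((monic_X_pow _).mul hG) hP ?_ (by omega) ?_
    · rw [(monic_X_pow _).natDegree_mul hG, natDegree_X_pow]
      omega
    · rw [(monic_X_pow _).nextCoeff_mul hG, monic_X.nextCoeff_pow, hGcoeff, hcoeff]
      simp [nextCoeff]
  obtain ⟨Y, b, hY0, hYz, hY⟩ := exists_numerators hc hs (G 0) z P hdeg
  have hcop : IsCoprime (X - C c) P :=
    (irreducible_X_sub_C c).coprime_iff_not_dvd.2 (by rwa [dvd_iff_isRoot])
  obtain ⟨u, w, huw⟩ := hcop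
  let mk := AdjoinRoot.mk P
  have hγ : mk u * mk (X - C c) = 1 := by
    rw [← map_mul, ← map_one mk, ← huw, map_add, map_mul mk w, AdjoinRoot.mk_self, mul_zero,
      add_zero]
  refine ⟨⟨G, a, fun t => mk u ^ t * mk (Y t), hs, hG, hGd, fun t ht => hGsucc t (by omega), ?_, ?_,
    fun t ht => ?_⟩, rfl⟩
  · rw [aeval_mulRoot_apply, hY0, pow_zero, one_mul, mul_one]
  · rw [hYz, AdjoinRoot.mk_self, mul_zero]
  · obtain ⟨hbd, hYt⟩ := hY t ht
    have hb : mk (b t) ∈ krylov (mulRoot P) 1 (s + 1) := by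
      have := aeval_apply_mem_krylov (T := mulRoot P) (v := 1) (Nat.lt_succ_of_le hbd)
      rwa [aeval_mulRoot_apply, mul_one] at this
    have hpow : mk u ^ t * mk (X - C c) ^ t = 1 := by rw [← mul_pow, hγ, one_pow]
    have hkey : mulRoot P (mulRoot P (mk u ^ t * mk (Y t)) - mk u ^ (t + 1) * mk (Y (t + 1))) =
        mk (b t) + -c • (mk u ^ (t + 1) * mk (Y (t + 1))) := by
      have hX : mk X = AdjoinRoot.root P := AdjoinRoot.mk_X
      have hC : mk (C c) = algebraMap K _ c := rfl
      have hYt' := congrArg mk hYt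
      simp only [map_mul, map_pow, map_add, map_sub, hX, hC] at hYt' hγ hpow
      simp only [mulRoot, LinearMap.mulLeft_apply, Algebra.smul_def, map_neg]
      linear_combination mk u ^ t * hYt' + mk (b t) * hpow - mk u ^ t * mk (Y (t + 1)) * hγ
    rw [hkey]
    exact Submodule.add_mem_sup hb (Submodule.smul_mem _ _ (Submodule.mem_span_singleton_self _))

lemma exists_isTorsionAddSqZero_isCyclicModKer [Infinite K] {f : K[X]} (hf : f.Monic) {s z : ℕ}
    (hs : 1 ≤ s) (hfd : f.natDegree = s + (z + 1)) (hδ : f.nextCoeff = 0 ∨ f.nextCoeff ^ 2 = 1) :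
    ∃ (P : K[X]) (A : Module.End K (AdjoinRoot P)), P.Monic ∧ P.natDegree = s + 2 * (z + 1) ∧
      IsTorsionAddSqZero A ∧ IsCyclicModKer A f 1 := by
  obtain ⟨P, hP, hPd, hcoeff, M, hM, hPM⟩ :=
    exists_monic_nextCoeff_eq_dvd_X_pow_sub_one hδ (n := s + 2 * (z + 1)) (by omega)
  obtain ⟨c, hc⟩ : ∃ c, (X * P).eval c ≠ 0 := by
    by_contra! h
    exact (monic_X.mul hP).ne_zero (Polynomial.funext fun c => (h c).trans eval_zero.symm)
  rw [eval_mul, eval_X] at hc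
  obtain ⟨D, rfl⟩ := exists_ladder hf hP hs hfd hPd hcoeff.symm (left_ne_zero_of_mul hc)
    (right_ne_zero_of_mul hc)
  have := hP.finite_adjoinRoot
  have hdim : Module.finrank K (AdjoinRoot P) = s + 2 * (z + 1) := by rw [finrank_adjoinRoot, hPd]
  have hT : IsOfFinOrder (mulRoot P) := isOfFinOrder_mulRoot hM hPM
  have hinj : Function.Injective (mulRoot P) :=
    ((Module.End.isUnit_iff _).1 hT.isUnit).injective
  have hcyc (w : AdjoinRoot P) : ∃ p : K[X], aeval (mulRoot P) p 1 = w := by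
    obtain ⟨p, rfl⟩ := AdjoinRoot.mk_surjective w
    exact ⟨p, by rw [aeval_mulRoot_apply, mul_one]⟩
  have h := D.isCompl hcyc hdim
  exact ⟨P, D.endo h, hP, hPd, D.isTorsionAddSqZero_endo h hT, D.isCyclicModKer h hinj hdim hfd⟩

end Perturbation

section Blocks

variable {K : Type*} [Field K]

lemma isTorsionAddSqZero_mulRoot_prodMap_zero_of_dvd_X_pow_sub_one [Infinite K] {f : K[X]}
    (hf : f.Monic) {M : ℕ} (hM : 1 ≤ M) (hfM : f ∣ X ^ M - 1)
    (hδ : f.nextCoeff = 0 ∨ f.nextCoeff ^ 2 = 1) {z : ℕ} (hz : z ≤ f.natDegree) :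
    IsTorsionAddSqZero ((mulRoot f).prodMap (0 : Module.End K (Fin z → K))) := by
  have hT : IsOfFinOrder (mulRoot f) := isOfFinOrder_mulRoot hM hfM
  obtain rfl | hz0 := Nat.eq_zero_or_pos z
  · have h0 : IsOfFinOrder (0 : Module.End K (Fin 0 → K)) :=
      Subsingleton.elim (1 : Module.End K (Fin 0 → K)) 0 ▸ IsOfFinOrder.one
    exact .of_isOfFinOrder
      ((LinearMap.prodMapRingHom K _ _).toMonoidHom.isOfFinOrder (hT.prod_mk h0))
  obtain rfl | hlt := hz.eq_or_lt
  · have := hf.finite_adjoinRoot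
    let e : AdjoinRoot f ≃ₗ[K] (Fin f.natDegree → K) :=
      LinearEquiv.ofFinrankEq _ _ (by rw [finrank_adjoinRoot, Module.finrank_fin_fun])
    refine (IsTorsionAddSqZero.iff_of_conj ((LinearEquiv.refl K _).prodCongr e) fun x => ?_).1
      (.prodMap_zero_of_isOfFinOrder hT)
    exact Prod.ext rfl (map_zero e)
  obtain ⟨z, rfl⟩ := Nat.exists_eq_add_of_le' hz0
  obtain ⟨s, hs⟩ := Nat.exists_eq_add_of_lt hlt
  obtain ⟨P, A, hP, hPd, hA, hAf⟩ :=
    exists_isTorsionAddSqZero_isCyclicModKer hf (s := s + 1) (z := z) (by omega) (by omega) hδ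
  have := hP.finite_adjoinRoot
  exact hAf.mulRoot_of_isCoprime hA hf (isCoprime_X_of_dvd_X_pow_sub_one hM hfM)
    (by rw [finrank_adjoinRoot]; omega)

lemma isCyclicModKer_mulRoot_prod {q : K[X]} {s : AdjoinRoot q →ₗ[K] AdjoinRoot q}
    (hs : Function.Injective s) :
    IsCyclicModKer ((mulRoot q).prod s ∘ₗ LinearMap.fst K _ _) q (1, 0) := by
  set A : Module.End K (AdjoinRoot q × AdjoinRoot q) := (mulRoot q).prod s ∘ₗ LinearMap.fst K _ _
  have hfst (p : K[X]) (v) : (aeval A p v).1 = AdjoinRoot.mk q p * v.1 := by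
    induction p using Polynomial.induction_on generalizing v with
    | C a => simp [Algebra.smul_def, AdjoinRoot.algebraMap_eq]
    | add p r hp hr => simp [hp, hr, add_mul]
    | monomial n a ih =>
      rw [pow_succ, ← mul_assoc, aeval_mul_apply, ih, aeval_X, map_mul _ _ X, AdjoinRoot.mk_X,
        mul_assoc]
      rfl
  have hA {v w : AdjoinRoot q × AdjoinRoot q} (h : v.1 = w.1) : A v = A w :=
    congrArg ((mulRoot q).prod s) h
  refine ⟨?_, fun w => ?_, ?_⟩
  · rw [← map_zero A]
    exact hA (by rw [hfst, AdjoinRoot.mk_self, zero_mul, Prod.fst_zero])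
  · obtain ⟨p, hp⟩ := AdjoinRoot.mk_surjective w.1
    exact ⟨p, hA (by rw [hfst, hp, mul_one])⟩
  · have hinj : Function.Injective ((mulRoot q).prod s) := fun x y hxy => hs (congrArg Prod.snd hxy)
    rw [LinearMap.range_comp_of_range_eq_top _ Submodule.range_fst,
      LinearMap.finrank_range_of_inj hinj, finrank_adjoinRoot]

lemma exists_algHom_root_eq_neg (d : ℕ) :
    ∃ σ : AdjoinRoot (X ^ d : K[X]) →ₐ[K] AdjoinRoot (X ^ d : K[X]),
      σ (AdjoinRoot.root _) = -AdjoinRoot.root _ := by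
  have hroot : AdjoinRoot.root (X ^ d : K[X]) ^ d = 0 := by
    rw [← AdjoinRoot.mk_X, ← map_pow, AdjoinRoot.mk_self]
  refine ⟨AdjoinRoot.liftAlgHom _ (Algebra.ofId K _) (-AdjoinRoot.root _) ?_,
    AdjoinRoot.liftAlgHom_root ..⟩
  rw [eval₂_X_pow, neg_pow, hroot, mul_zero]

lemma exists_isTorsionAddSqZero_isCyclicModKer_X_pow [NeZero (2 : K)] (d : ℕ) :
    ∃ A : Module.End K (AdjoinRoot (X ^ d : K[X]) × AdjoinRoot (X ^ d : K[X])),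
      IsTorsionAddSqZero A ∧ IsCyclicModKer A (X ^ d) (1, 0) := by
  obtain ⟨σ, hσ⟩ := exists_algHom_root_eq_neg (K := K) d
  have hσσ (x) : σ (σ x) = x := by
    have : σ.comp σ = AlgHom.id K _ := AdjoinRoot.algHom_ext (by simp [hσ])
    exact DFunLike.congr_fun this x
  refine ⟨(mulRoot _).prod σ.toLinearMap ∘ₗ LinearMap.fst K _ _, ?_,
    isCyclicModKer_mulRoot_prod (Function.LeftInverse.injective hσσ)⟩
  have htwo : 2 * ((2 : K)⁻¹ • AdjoinRoot.root (X ^ d : K[X])) = AdjoinRoot.root _ := by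
    rw [mul_smul_comm, two_mul, ← two_smul K, smul_smul, inv_mul_cancel₀ two_ne_zero, one_smul]
  have h := IsTorsionAddSqZero.mulLeft_prod_involution hσσ
    (h := (2 : K)⁻¹ • AdjoinRoot.root _) (by rw [map_smul, hσ, smul_neg])
  rwa [htwo] at h

lemma isTorsionAddSqZero_mulRoot_X_pow_prodMap_zero [Infinite K] [NeZero (2 : K)] {a z : ℕ}
    (hz : z ≤ a) :
    IsTorsionAddSqZero
      ((mulRoot (X ^ (a + 2) : K[X])).prodMap (0 : Module.End K (Fin z → K))) := by
  have hf : (X ^ (a + 1) : K[X]).Monic := monic_X_pow _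
  have hX : (X : K[X]) ∣ X ^ (a + 1) := dvd_pow_self X a.succ_ne_zero
  rw [pow_succ' X (a + 1)]
  obtain rfl | hlt := hz.eq_or_lt
  · obtain ⟨A, hA, hAf⟩ := exists_isTorsionAddSqZero_isCyclicModKer_X_pow (K := K) (z + 1)
    have := hf.finite_adjoinRoot
    refine hAf.mulRoot_of_dvd hA hf hX ?_
    rw [Module.finrank_prod, finrank_adjoinRoot, natDegree_X_mul hf.ne_zero, natDegree_X_pow]
    omega
  · obtain ⟨s, rfl⟩ := Nat.exists_eq_add_of_lt hlt
    have hδ : (X ^ (z + s + 1 + 1) : K[X]).nextCoeff = 0 := by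
      simp [nextCoeff]
    obtain ⟨P, A, hP, hPd, hA, hAf⟩ := exists_isTorsionAddSqZero_isCyclicModKer hf
      (s := s + 1) (z := z) (by omega) (by rw [natDegree_X_pow]; omega) (.inl hδ)
    have := hP.finite_adjoinRoot
    refine hAf.mulRoot_of_dvd hA hf hX ?_
    rw [finrank_adjoinRoot, natDegree_X_mul hf.ne_zero, natDegree_X_pow]
    omega

lemma finrank_range_mulRoot_lt {q : K[X]} (hq : q.Monic) (hX : X ∣ q) :
    Module.finrank K (LinearMap.range (mulRoot q)) < q.natDegree := by
  have := hq.finite_adjoinRoot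
  rw [← finrank_adjoinRoot]
  refine Submodule.finrank_lt fun htop => ?_
  obtain ⟨x, hx⟩ := LinearMap.range_eq_top.1 htop 1
  obtain ⟨p, rfl⟩ := AdjoinRoot.mk_surjective x
  rw [mulRoot_mk, ← map_one (AdjoinRoot.mk q), AdjoinRoot.mk_eq_mk] at hx
  exact not_isUnit_X (isUnit_of_dvd_one ((dvd_sub_right (dvd_mul_right X p)).1 (hX.trans hx)))

/-- `IsBlock q c` says that `q` is a power of a prime whose companion matrix may occur in a periodic
matrix over `ℚ`, other than the `1 × 1` zero block, and that this companion matrix can absorb up to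
`c` such zero blocks. -/
inductive IsBlock : ℚ[X] → ℕ → Prop
  | X_pow (a : ℕ) : IsBlock (X ^ (a + 2)) a
  | cyclotomic {m : ℕ} (hm : 0 < m) : IsBlock (cyclotomic m ℚ) (cyclotomic m ℚ).natDegree

namespace IsBlock

variable {q : ℚ[X]} {c : ℕ}

lemma monic (h : IsBlock q c) : q.Monic := by
  obtain a | @⟨m, -⟩ := h
  · exact monic_X_pow _
  · exact cyclotomic.monic m ℚ

lemma two_mul_finrank_range_mulRoot_le (h : IsBlock q c) :
    2 * Module.finrank ℚ (LinearMap.range (mulRoot q)) ≤ q.natDegree + c := by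
  have hq := h.monic
  have := hq.finite_adjoinRoot
  obtain a | @⟨m, -⟩ := h
  · have := finrank_range_mulRoot_lt hq (dvd_pow_self X (by omega))
    rw [natDegree_X_pow] at this ⊢
    omega
  · have := (mulRoot (Polynomial.cyclotomic m ℚ)).finrank_range_le
    rw [finrank_adjoinRoot] at this
    omega

lemma isTorsionAddSqZero (h : IsBlock q c) {z : ℕ} (hz : z ≤ c) :
    IsTorsionAddSqZero ((mulRoot q).prodMap (0 : Module.End ℚ (Fin z → ℚ))) := by
  obtain a | @⟨m, hm⟩ := h
  · exact isTorsionAddSqZero_mulRoot_X_pow_prodMap_zero hz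
  · exact isTorsionAddSqZero_mulRoot_prodMap_zero_of_dvd_X_pow_sub_one (cyclotomic.monic m ℚ) hm
      (cyclotomic.dvd_X_pow_sub_one m ℚ) (nextCoeff_cyclotomic_eq_zero_or_sq_eq_one hm) hz

end IsBlock

end Blocks

section Decomposition

universe u

lemma exists_linearEquiv_pi_adjoinRoot {K : Type u} {V : Type*} [Field K] [AddCommGroup V]
    [Module K V] [Module.Finite K V] (A : Module.End K V) :
    ∃ (ι : Type u) (_ : Fintype ι) (p : ι → K[X]) (d : ι → ℕ)
      (e : V ≃ₗ[K] ∀ i, AdjoinRoot (p i ^ d i)), (∀ i, Irreducible (p i)) ∧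
      ∀ v, e (A v) = LinearMap.piMap (fun i => mulRoot (p i ^ d i)) (e v) := by
  classical
  obtain ⟨ι, _, p, hp, d, ⟨E⟩⟩ :=
    Module.equiv_directSum_of_isTorsion (Module.AEval.isTorsion_of_finiteDimensional K V A)
  let E' := E.trans (DirectSum.linearEquivFunOnFintype K[X] ι fun i => K[X] ⧸ K[X] ∙ p i ^ d i)
  refine ⟨ι, ‹_›, p, d, (Module.AEval'.of A).trans (E'.restrictScalars K), hp, fun v => ?_⟩
  have hX (q : K[X]) (x : K[X] ⧸ K[X] ∙ q) : (X : K[X]) • x = mulRoot q x := by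
    obtain ⟨p, rfl⟩ := Submodule.Quotient.mk_surjective _ x
    exact (mulRoot_mk q p).symm
  change E' (Module.AEval'.of A (A v)) = _
  rw [← Module.AEval'.X_smul_of, map_smul]
  exact funext fun i => hX _ _

lemma exists_linearEquiv_mulRoot_of_associated {K : Type*} [CommRing K] {f g : K[X]}
    (h : Associated f g) :
    ∃ e : AdjoinRoot f ≃ₗ[K] AdjoinRoot g, ∀ x, e (mulRoot f x) = mulRoot g (e x) := by
  refine ⟨(AdjoinRoot.algEquivOfAssociated K f g h).toLinearEquiv, fun x => ?_⟩
  simp [mulRoot]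

lemma exists_associated_isBlock {p : ℚ[X]} (hp : Irreducible p) {d k N : ℕ} (hN : 0 < N)
    (hd : p ^ d ∣ X ^ k * (X ^ N - 1)) :
    ∃ q, Associated (p ^ d) q ∧ (q ∣ X ∨ ∃ c, IsBlock q c) := by
  by_cases hX : p ∣ X
  · refine ⟨X ^ d, (hp.associated_of_dvd irreducible_X hX).pow_pow, ?_⟩
    obtain hd | ⟨a, rfl⟩ : d ≤ 1 ∨ ∃ a, d = a + 2 := by
      obtain _ | _ | a := d <;> simp
    · exact .inl (by simpa using pow_dvd_pow (X : ℚ[X]) hd)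
    · exact .inr ⟨a, .X_pow a⟩
  obtain _ | d := d
  · exact ⟨1, by rw [pow_zero], .inl (one_dvd X)⟩
  have hcop : IsCoprime (p ^ (d + 1)) (X ^ k) := ((hp.coprime_iff_not_dvd).2 hX).pow
  have hdvd := hcop.dvd_of_dvd_mul_left hd
  have hsep : (X ^ N - 1 : ℚ[X]).Separable :=
    X_pow_sub_one_separable_iff.2 (Nat.cast_ne_zero.2 hN.ne')
  obtain rfl : d = 0 := by
    by_contra h
    refine hp.not_isUnit (hsep.squarefree p ((sq p).symm ▸ (pow_dvd_pow p ?_).trans hdvd))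
    omega
  rw [zero_add, pow_one] at hdvd ⊢
  rw [← prod_cyclotomic_eq_X_pow_sub_one hN] at hdvd
  obtain ⟨i, hi, hpi⟩ := hp.prime.exists_mem_finset_dvd hdvd
  have hi0 := Nat.pos_of_mem_divisors hi
  exact ⟨cyclotomic i ℚ, hp.associated_of_dvd (cyclotomic.irreducible_rat hi0) hpi,
    .inr ⟨_, .cyclotomic hi0⟩⟩

lemma dvd_of_linearEquiv_pi_mulRoot {K V ι : Type*} [CommRing K] [AddCommGroup V] [Module K V]
    {A : Module.End K V} {q : ι → K[X]} (e : V ≃ₗ[K] ∀ i, AdjoinRoot (q i))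
    (he : ∀ v, e (A v) = LinearMap.piMap (fun i => mulRoot (q i)) (e v)) {k m : ℕ}
    (hA : A ^ m = A ^ k) (i : ι) : q i ∣ X ^ m - X ^ k := by
  have hpow (n : ℕ) (v : V) : e ((A ^ n) v) i = AdjoinRoot.mk (q i) (X ^ n) * e v i := by
    induction n with
    | zero => simp
    | succ n ih =>
      rw [pow_succ', Module.End.mul_apply, he, pow_succ', map_mul, mul_assoc, ← ih, AdjoinRoot.mk_X]
      rfl
  have h := hpow m (e.symm 1)
  rw [hA, hpow, e.apply_symm_apply, Pi.one_apply, mul_one, mul_one, eq_comm] at h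
  exact AdjoinRoot.mk_eq_mk.1 h

lemma mulRoot_eq_zero_of_dvd_X {K : Type*} [CommRing K] {q : K[X]} (hq : q ∣ X) :
    mulRoot q = 0 := by
  refine LinearMap.ext fun x => ?_
  rw [mulRoot, LinearMap.mulLeft_apply, ← AdjoinRoot.mk_X, AdjoinRoot.mk_eq_zero.2 hq, zero_mul,
    LinearMap.zero_apply]

lemma exists_linearEquiv_piMap_prodMap_zero {K V ι : Type*} {E : ι → Type*} [Field K]
    [AddCommGroup V] [Module K V] [Module.Finite K V] [∀ i, AddCommGroup (E i)]
    [∀ i, Module K (E i)] {A : Module.End K V} {B : ∀ i, Module.End K (E i)}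
    (e : V ≃ₗ[K] ∀ i, E i) (he : ∀ v, e (A v) = LinearMap.piMap B (e v)) {P : ι → Prop}
    (hP : ∀ i, ¬ P i → B i = 0) :
    ∃ (r : ℕ) (e' : V ≃ₗ[K] (∀ i : {i // P i}, E i) × (Fin r → K)),
      ∀ v, e' (A v) = (LinearMap.piMap fun i : {i // P i} => B i).prodMap 0 (e' v) := by
  classical
  let σ : (∀ i, E i) ≃ₗ[K] (∀ i : {i // P i}, E i) × (∀ i : {i // ¬ P i}, E i) :=
    { Equiv.piEquivPiSubtypeProd P E with
      map_add' := fun _ _ => rfl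
      map_smul' := fun _ _ => rfl }
  have := Module.Finite.equiv (e.trans σ)
  have : Module.Finite K (∀ i : {i // ¬ P i}, E i) :=
    .of_surjective (LinearMap.snd K (∀ i : {i // P i}, E i) _) Prod.snd_surjective
  let τ := (Module.finBasis K (∀ i : {i // ¬ P i}, E i)).equivFun
  refine ⟨_, (e.trans σ).trans ((LinearEquiv.refl K _).prodCongr τ), fun v => ?_⟩
  have h0 : (σ (e (A v))).2 = 0 := funext fun i => by
    change e (A v) i = 0
    rw [he]
    exact LinearMap.congr_fun (hP i i.2) (e v i)
  refine Prod.ext (funext fun i => congrFun (he v) i) ?_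
  change τ (σ (e (A v))).2 = 0
  rw [h0, map_zero]

lemma exists_isBlock_decomposition {V : Type*} [AddCommGroup V] [Module ℚ V] [Module.Finite ℚ V]
    {A : Module.End ℚ V} {k m : ℕ} (hkm : k < m) (hA : A ^ m = A ^ k) :
    ∃ (ι : Type) (_ : Fintype ι) (q : ι → ℚ[X]) (c : ι → ℕ) (r : ℕ)
      (e : V ≃ₗ[ℚ] (∀ i, AdjoinRoot (q i)) × (Fin r → ℚ)), (∀ i, IsBlock (q i) (c i)) ∧
      ∀ v, e (A v) = (LinearMap.piMap fun i => mulRoot (q i)).prodMap 0 (e v) := by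
  classical
  obtain ⟨ι, _, p, d, E, hp, hE⟩ := exists_linearEquiv_pi_adjoinRoot A
  have hdvd (i) : p i ^ d i ∣ X ^ k * (X ^ (m - k) - 1) := by
    rw [mul_sub, mul_one, ← pow_add, Nat.add_sub_cancel' hkm.le]
    exact dvd_of_linearEquiv_pi_mulRoot E hE hA i
  choose q hpq hq using fun i => exists_associated_isBlock (hp i) (Nat.sub_pos_of_lt hkm) (hdvd i)
  choose φ hφ using fun i => exists_linearEquiv_mulRoot_of_associated (hpq i)
  have hφE (v : V) : E.trans (.piCongrRight φ) (A v) =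
      LinearMap.piMap (fun i => mulRoot (q i)) (E.trans (.piCongrRight φ) v) := by
    funext i
    simp [hE, hφ]
  obtain ⟨r, e, he⟩ := exists_linearEquiv_piMap_prodMap_zero (P := fun i => ¬ q i ∣ X)
    (E.trans (.piCongrRight φ)) hφE fun i hi => mulRoot_eq_zero_of_dvd_X (not_not.1 hi)
  choose c hc using fun i : {i // ¬ q i ∣ X} => (hq i).resolve_left i.2
  exact ⟨{i // ¬ q i ∣ X}, inferInstance, fun i => q i, c, r, e, hc, he⟩

end Decomposition

section Assembly

lemma exists_le_sum_eq {ι : Type*} [Fintype ι] {c : ι → ℕ} {r : ℕ} (hr : r ≤ ∑ i, c i) :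
    ∃ z : ι → ℕ, (∀ i, z i ≤ c i) ∧ ∑ i, z i = r := by
  classical
  induction r with
  | zero => exact ⟨0, fun _ => Nat.zero_le _, Finset.sum_const_zero⟩
  | succ r ih =>
    obtain ⟨z, hz, rfl⟩ := ih (Nat.le_of_succ_le hr)
    obtain ⟨i, -, hi⟩ := Finset.exists_lt_of_sum_lt (Nat.lt_of_succ_le hr)
    refine ⟨z + Pi.single i 1, fun j => ?_, by simp [Finset.sum_add_distrib]⟩
    obtain rfl | hj := eq_or_ne j i
    · simpa using hi
    · simpa [hj] using hz j

variable {K ι : Type*} [Field K] [Fintype ι] {E : ι → Type*} [∀ i, AddCommGroup (E i)]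
  [∀ i, Module K (E i)]

lemma isTorsionAddSqZero_piMap_prodMap_zero {B : ∀ i, Module.End K (E i)} {z : ι → ℕ}
    (hB : ∀ i, IsTorsionAddSqZero ((B i).prodMap (0 : Module.End K (Fin (z i) → K)))) :
    IsTorsionAddSqZero ((LinearMap.piMap B).prodMap (0 : Module.End K (Fin (∑ i, z i) → K))) := by
  let τ : (Fin (∑ i, z i) → K) ≃ₗ[K] ∀ i, Fin (z i) → K :=
    LinearEquiv.ofFinrankEq _ _ (by simp [Module.finrank_pi_fintype])
  let σ : ((∀ i, E i) × (∀ i, Fin (z i) → K)) ≃ₗ[K] ∀ i, E i × (Fin (z i) → K) :=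
    { toFun := fun x i => (x.1 i, x.2 i)
      invFun := fun y => (fun i => (y i).1, fun i => (y i).2)
      map_add' := fun _ _ => rfl
      map_smul' := fun _ _ => rfl }
  refine (IsTorsionAddSqZero.iff_of_conj (((LinearEquiv.refl K _).prodCongr τ).trans σ)
    fun x => ?_).2 (IsTorsionAddSqZero.piMap hB)
  exact funext fun i => Prod.ext rfl (congrFun (map_zero τ) i)

lemma finrank_range_piMap_prodMap_zero_le [∀ i, Module.Finite K (E i)] {W : Type*} [AddCommGroup W]
    [Module K W] (B : ∀ i, Module.End K (E i)) :
    Module.finrank K (LinearMap.range ((LinearMap.piMap B).prodMap (0 : Module.End K W))) ≤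
      ∑ i, Module.finrank K (LinearMap.range (B i)) := by
  let φ : (∀ i, LinearMap.range (B i)) →ₗ[K] (∀ i, E i) × W :=
    (LinearMap.piMap fun i => (LinearMap.range (B i)).subtype).prod 0
  have hle : LinearMap.range ((LinearMap.piMap B).prodMap (0 : Module.End K W)) ≤
      LinearMap.range φ := by
    rintro _ ⟨x, rfl⟩
    exact ⟨fun i => ⟨B i (x.1 i), LinearMap.mem_range_self _ _⟩, rfl⟩
  rw [← Module.finrank_pi_fintype]
  exact (Submodule.finrank_mono hle).trans φ.finrank_range_le

theorem isTorsionAddSqZero_of_pow_eq_pow {V : Type*} [AddCommGroup V] [Module ℚ V]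
    [Module.Finite ℚ V] {A : Module.End ℚ V} {k m : ℕ} (hkm : k < m) (hA : A ^ m = A ^ k)
    (hrank : Module.finrank ℚ V ≤ 2 * Module.finrank ℚ (LinearMap.range A)) :
    IsTorsionAddSqZero A := by
  obtain ⟨ι, _, q, c, r, e, hq, he⟩ := exists_isBlock_decomposition hkm hA
  have (i : ι) : Module.Finite ℚ (AdjoinRoot (q i)) := (hq i).monic.finite_adjoinRoot
  have hdim : Module.finrank ℚ V = ∑ i, (q i).natDegree + r := by
    rw [e.finrank_eq, Module.finrank_prod, Module.finrank_pi_fintype, Module.finrank_fin_fun]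
    simp only [finrank_adjoinRoot]
  have hrange : Module.finrank ℚ (LinearMap.range A) ≤
      ∑ i, Module.finrank ℚ (LinearMap.range (mulRoot (q i))) := by
    refine le_trans ?_ (finrank_range_piMap_prodMap_zero_le (W := Fin r → ℚ) _)
    rw [← e.finrank_map_eq]
    refine Submodule.finrank_mono ?_
    rintro _ ⟨_, ⟨v, rfl⟩, rfl⟩
    exact ⟨e v, (he v).symm⟩
  have hblock := Finset.sum_le_sum fun i (_ : i ∈ Finset.univ) =>
    (hq i).two_mul_finrank_range_mulRoot_le
  rw [← Finset.mul_sum, Finset.sum_add_distrib] at hblock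
  obtain ⟨z, hz, rfl⟩ := exists_le_sum_eq (c := c) (r := r) (by omega)
  exact (IsTorsionAddSqZero.iff_of_conj e he).2
    (isTorsionAddSqZero_piMap_prodMap_zero fun i => (hq i).isTorsionAddSqZero (hz i))

end Assembly

/-- Over `ℚ`, every periodic matrix of rank at least `n/2` is the sum of a
torsion matrix and a square-zero matrix. -/
theorem periodic_eq_torsion_add_squareZero_rat
    {n : ℕ} (A : Matrix (Fin n) (Fin n) ℚ)
    (hA : ∃ m k : ℕ, 1 ≤ k ∧ k < m ∧ A ^ m = A ^ k)
    (hrank : n ≤ 2 * A.rank) :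
    ∃ T N : Matrix (Fin n) (Fin n) ℚ,
      IsUnit T ∧ (∃ s : ℕ, 1 ≤ s ∧ T ^ s = 1) ∧ N ^ 2 = 0 ∧
      A = T + N := by
  obtain ⟨m, k, -, hkm, hpow⟩ := hA
  let Φ : Matrix (Fin n) (Fin n) ℚ ≃ₐ[ℚ] Module.End ℚ (Fin n → ℚ) := Matrix.toLinAlgEquiv'
  have hΦ : IsTorsionAddSqZero (Φ A) :=
    isTorsionAddSqZero_of_pow_eq_pow hkm (by rw [← map_pow, hpow, map_pow])
      (by rwa [Module.finrank_fin_fun])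
  obtain ⟨T, N, hT, hN, hTN⟩ := hΦ.map (Φ.symm : _ →+* Matrix (Fin n) (Fin n) ℚ)
  rw [RingHom.coe_coe, Φ.symm_apply_apply] at hTN
  exact ⟨T, N, hT.isUnit, isOfFinOrder_iff_pow_eq_one.1 hT, hN, hTN⟩
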